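/- Let V and W be H-modules, each finite-dimensional over F and indecomposable. Let s ∈ ℕ and suppose there exist H-linear maps f : V → (Fin s → W) and g : (Fin s → W) → V with g ∘ f = id_V (so V is a direct summand of the direct sum of s copies of W). Then V and W are isomorphic as H-modules. -/

import Mathlib

/-- An `H`-module `M` is indecomposable if it is nonzero and whenever `p` and `q` are
complementary submodules, one of them is trivial. -/
def IsIndecomposableModule (H : Type*) [Ring H] (M : Type*) [AddCommGroup M]
    [Module H M] : Prop :=
  (∃ x : M, x ≠ 0) ∧
    ∀ p q : Submodule H M, p ⊓ q = ⊥ → p ⊔ q = ⊤ → p = ⊥ ∨ q = ⊥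

/-!
By Fitting's lemma, the endomorphism ring of an indecomposable module `V` of finite length is
local. If `V` is a direct summand of a finite direct sum of modules `W i`, then `id_V` is the sum of
the compositions `V → W i → V`, so one of these is an automorphism. Hence `V` is a direct summand of
that `W i`, and a nonzero direct summand of an indecomposable module is the whole module.
-/

theorem sum_comp_single_comp_proj_comp {R M P ι : Type*} {N : ι → Type*} [Semiring R]
    [AddCommMonoid M] [Module R M] [AddCommMonoid P] [Module R P] [∀ i, AddCommMonoid (N i)]
    [∀ i, Module R (N i)] [Fintype ι] [DecidableEq ι] (f : M →ₗ[R] ∀ i, N i)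
    (g : (∀ i, N i) →ₗ[R] P) :
    ∑ i, (g ∘ₗ LinearMap.single R N i) ∘ₗ (LinearMap.proj i ∘ₗ f) = g ∘ₗ f := by
  ext x
  calc (∑ i, (g ∘ₗ LinearMap.single R N i) ∘ₗ (LinearMap.proj i ∘ₗ f)) x
      = ∑ i, g (Pi.single i (f x i)) := LinearMap.sum_apply _ _ _
    _ = g (f x) := by rw [← map_sum, LinearMap.sum_single_apply]

section

variable {R M N P : Type*} [Ring R] [AddCommGroup M] [Module R M] [AddCommGroup N] [Module R N]
  [AddCommGroup P] [Module R P]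

theorem isCompl_ker_range_of_bijective_comp {f : M →ₗ[R] N} {g : N →ₗ[R] P}
    (hgf : Function.Bijective (g ∘ₗ f)) : IsCompl g.ker f.range where
  disjoint := by
    refine (LinearMap.disjoint_ker.mpr ?_).symm
    rintro _ ⟨x, rfl⟩ hx
    rw [(map_eq_zero_iff (g ∘ₗ f) hgf.injective).mp hx, map_zero]
  codisjoint := by
    refine codisjoint_iff_le_sup.mpr fun y _ ↦ ?_
    obtain ⟨x, hx : g (f x) = g y⟩ := hgf.surjective (g y)
    exact Submodule.mem_sup.mpr
      ⟨y - f x, LinearMap.sub_mem_ker_iff.mpr hx.symm, f x, ⟨x, rfl⟩, sub_add_cancel y (f x)⟩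

namespace IsIndecomposableModule

theorem nontrivial (hM : IsIndecomposableModule R M) : Nontrivial M :=
  let ⟨x, hx⟩ := hM.1
  nontrivial_of_ne x 0 hx

theorem eq_bot_or_eq_bot_of_isCompl (hM : IsIndecomposableModule R M) {p q : Submodule R M}
    (hpq : IsCompl p q) : p = ⊥ ∨ q = ⊥ :=
  hM.2 p q hpq.inf_eq_bot hpq.sup_eq_top

theorem isUnit_or_isNilpotent [IsArtinian R M] [IsNoetherian R M]
    (hM : IsIndecomposableModule R M) (φ : Module.End R M) : IsUnit φ ∨ IsNilpotent φ := by
  obtain ⟨n, hcompl, hn⟩ :=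
    (φ.eventually_isCompl_ker_pow_range_pow.and (Filter.eventually_ne_atTop 0)).exists
  rcases hM.eq_bot_or_eq_bot_of_isCompl hcompl with hker | hrange
  · have hbij : Function.Bijective (φ ^ n) :=
      IsArtinian.bijective_of_injective_endomorphism _ (LinearMap.ker_eq_bot.mp hker)
    exact .inl ((isUnit_pow_iff hn).mp ((Module.End.isUnit_iff _).mpr hbij))
  · exact .inr ⟨n, LinearMap.range_eq_bot.mp hrange⟩

theorem isLocalRing_end [IsArtinian R M] [IsNoetherian R M] (hM : IsIndecomposableModule R M) :
    IsLocalRing (Module.End R M) :=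
  have := hM.nontrivial
  .of_isUnit_or_isUnit_one_sub_self fun φ ↦
    (hM.isUnit_or_isNilpotent φ).imp_right IsNilpotent.isUnit_one_sub

theorem isLocalRing_end_of_finite (A : Type*) [CommRing A] [IsArtinianRing A] [Algebra A R]
    [Module A M] [IsScalarTower A R M] [Module.Finite A M] (hM : IsIndecomposableModule R M) :
    IsLocalRing (Module.End R M) :=
  have : IsArtinian R M := isArtinian_of_tower A inferInstance
  have : IsNoetherian R M := isNoetherian_of_tower A inferInstance
  hM.isLocalRing_end

theorem bijective_of_bijective_comp [Nontrivial M] (hN : IsIndecomposableModule R N)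
    {f : M →ₗ[R] N} {g : N →ₗ[R] P} (hgf : Function.Bijective (g ∘ₗ f)) : Function.Bijective g := by
  have hf : f ≠ 0 := by
    rintro rfl
    obtain ⟨x, hx⟩ := exists_ne (0 : M)
    exact hx (hgf.injective (by simp only [LinearMap.comp_zero, LinearMap.zero_apply]))
  have hker : g.ker = ⊥ :=
    (hN.eq_bot_or_eq_bot_of_isCompl (isCompl_ker_range_of_bijective_comp hgf)).resolve_right
      (mt LinearMap.range_eq_bot.mp hf)
  exact ⟨LinearMap.ker_eq_bot.mp hker, .of_comp hgf.surjective⟩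

end IsIndecomposableModule

end

theorem stmt4_general {H V ι : Type*} {W : ι → Type*} [Ring H] [AddCommGroup V] [Module H V]
    [IsLocalRing (Module.End H V)] [Finite ι] [∀ i, AddCommGroup (W i)] [∀ i, Module H (W i)]
    (hW : ∀ i, IsIndecomposableModule H (W i)) (f : V →ₗ[H] ∀ i, W i) (g : (∀ i, W i) →ₗ[H] V)
    (hgf : g ∘ₗ f = LinearMap.id) : ∃ i, Nonempty (V ≃ₗ[H] W i) := by
  classical
  have := Fintype.ofFinite ι
  have : Nontrivial V :=
    not_subsingleton_iff_nontrivial.mp fun _ ↦ not_subsingleton (Module.End H V) inferInstance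
  let a (i : ι) : V →ₗ[H] W i := LinearMap.proj i ∘ₗ f
  let b (i : ι) : W i →ₗ[H] V := g ∘ₗ LinearMap.single H W i
  have hsum : ∑ i, (b i ∘ₗ a i : Module.End H V) = 1 :=
    (sum_comp_single_comp_proj_comp f g).trans hgf
  obtain ⟨i, -, hi⟩ := IsLocalRing.exists_of_isUnit_sum (hsum ▸ isUnit_one)
  have hb : Function.Bijective (b i) :=
    (hW i).bijective_of_bijective_comp ((Module.End.isUnit_iff _).mp hi)
  exact ⟨i, ⟨(LinearEquiv.ofBijective (b i) hb).symm⟩⟩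

theorem stmt4 (F : Type*) [Field F] (H : Type*) [Ring H] [Algebra F H]
    (V W : Type*)
    [AddCommGroup V] [Module H V] [Module F V] [IsScalarTower F H V] [FiniteDimensional F V]
    [AddCommGroup W] [Module H W] [Module F W] [IsScalarTower F H W] [FiniteDimensional F W]
    (hV : IsIndecomposableModule H V) (hW : IsIndecomposableModule H W)
    (s : ℕ) (f : V →ₗ[H] (Fin s → W)) (g : (Fin s → W) →ₗ[H] V)
    (hgf : g.comp f = LinearMap.id) :
    Nonempty (V ≃ₗ[H] W) := by
  have := hV.isLocalRing_end_of_finite F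
  exact (stmt4_general (fun _ ↦ hW) f g hgf).elim fun _ h ↦ h
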